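/- arXiv:2205.04664 — 4 statements merged into one kernel-verified Lean document; each statement's English description precedes it below -/
import Mathlib

section
/- The intersection of the subspaces D_L over all subsets L of {1,…,n} with |L| = k+1 equals C. In other words, if t ∈ ℂ^n is such that every k+1 of the hyperplanes H_1^{t_1},…,H_n^{t_n} have a common point, then all n hyperplanes have a common point, i.e., the translated arrangement A^t is central. -/
open Matrix

/-- `Dsub k n α L` is the set of translations `t ∈ ℂⁿ` such that the affine hyperplanes
`H_i^{t_i} = {x : α_i ⬝ x = t_i}`, `i ∈ L`, have a common point. -/
def Dsub (k n : ℕ) (α : Fin n → Fin k → ℂ) (L : Finset (Fin n)) : Set (Fin n → ℂ) :=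
  {t | ∃ p : Fin k → ℂ, ∀ i ∈ L, α i ⬝ᵥ p = t i}

/-- `Ccen k n α` is the set of translations `t` for which the translated arrangement
`A^t` is central, i.e. all `n` hyperplanes have a common point. -/
def Ccen (k n : ℕ) (α : Fin n → Fin k → ℂ) : Set (Fin n → ℂ) :=
  {t | ∃ p : Fin k → ℂ, ∀ i, α i ⬝ᵥ p = t i}

/-!
Choose at most `k` of the equations `f i p = t i` whose maps `f i` span all the others, and let `p`
solve them. For each further index `i`, the chosen equations together with the `i`-th one are at
most `k + 1` in number, hence have a common solution `q`. As `p` and `q` agree under the chosen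
maps, they agree under every linear combination of these, so `f i p = f i q = t i`.
-/

section LinearSystem

open Module Set Submodule

lemma exists_finset_card_eq_and_span_image_eq {K M ι : Type*} [DivisionRing K] [AddCommGroup M]
    [Module K M] (v : ι → M) [Module.Finite K (span K (range v))] :
    ∃ S : Finset ι, S.card = finrank K (span K (range v)) ∧
      span K (v '' S) = span K (range v) := by
  obtain ⟨b, hb_mem, hb_span, hb_indep⟩ := exists_fun_fin_finrank_span_eq K (range v)
  choose a ha using hb_mem
  obtain rfl : v ∘ a = b := funext ha
  refine ⟨Finset.univ.map ⟨a, hb_indep.injective.of_comp⟩, by simp, ?_⟩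
  simpa [range_comp] using hb_span

lemma exists_finset_superset_card_eq {ι : Type*} {s : Finset ι} {m : ℕ} (hs : s.card ≤ m)
    (hm : m ≤ ENat.card ι) : ∃ t, s ⊆ t ∧ t.card = m := by
  obtain hι | hι := finite_or_infinite ι
  · have := Fintype.ofFinite ι
    exact Finset.exists_superset_card_eq hs (by simpa using hm)
  · exact Infinite.exists_superset_card_eq s m hs

lemma apply_eq_of_mem_span_image {R V W ι : Type*} [CommSemiring R] [AddCommMonoid V]
    [Module R V] [AddCommMonoid W] [Module R W] {f : ι → V →ₗ[R] W} {t : ι → W} {S : Set ι}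
    {i : ι} {p q : V} (hi : f i ∈ span R (f '' S)) (hp : ∀ j ∈ S, f j p = t j)
    (hq : ∀ j ∈ insert i S, f j q = t j) : f i p = t i := by
  have agree_on_image : EqOn (LinearMap.applyₗ (R := R) (M₂ := W) p) (LinearMap.applyₗ q)
      (f '' S) := by
    rintro _ ⟨j, hj, rfl⟩
    exact (hp j hj).trans (hq j (mem_insert_of_mem i hj)).symm
  calc
    f i p = f i q := LinearMap.eqOn_span agree_on_image hi
    _ = t i := hq i (mem_insert i S)

variable {K V W ι : Type*} [Field K] [AddCommGroup V] [Module K V] [AddCommGroup W] [Module K W]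
  (f : ι → V →ₗ[K] W) [Module.Finite K (span K (range f))] {k : ℕ}

theorem exists_forall_apply_eq_of_forall_card_le (hrank : finrank K (span K (range f)) ≤ k)
    {t : ι → W} (h : ∀ L : Finset ι, L.card ≤ k + 1 → ∃ p, ∀ i ∈ L, f i p = t i) :
    ∃ p, ∀ i, f i p = t i := by
  classical
  obtain ⟨S, hS_card, hS_span⟩ := exists_finset_card_eq_and_span_image_eq (K := K) f
  have hS_le : S.card ≤ k := hS_card.trans_le hrank
  obtain ⟨p, hp⟩ := h S (hS_le.trans k.le_succ)
  refine ⟨p, fun i => ?_⟩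
  obtain ⟨q, hq⟩ := h (insert i S) ((Finset.card_insert_le i S).trans (Nat.succ_le_succ hS_le))
  have hi : f i ∈ span K (f '' S) := hS_span ▸ subset_span (mem_range_self i)
  exact apply_eq_of_mem_span_image hi hp (by simpa using hq)

theorem stmt_3_general (hrank : finrank K (span K (range f)) ≤ k) (hcard : k + 1 ≤ ENat.card ι) :
    (⋂ L : Finset ι, ⋂ (_ : L.card = k + 1), {t : ι → W | ∃ p, ∀ i ∈ L, f i p = t i}) =
      {t | ∃ p, ∀ i, f i p = t i} := by
  ext t
  simp only [mem_iInter]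
  refine ⟨fun h => exists_forall_apply_eq_of_forall_card_le f hrank fun L hL => ?_,
    fun ⟨p, hp⟩ _ _ => ⟨p, fun i _ => hp i⟩⟩
  obtain ⟨L', hLL', hL'⟩ := exists_finset_superset_card_eq hL (by exact_mod_cast hcard)
  obtain ⟨p, hp⟩ := h L' hL'
  exact ⟨p, fun i hi => hp i (hLL' hi)⟩

end LinearSystem

theorem stmt_3 (k n : ℕ) (hk : 0 < k) (hkn : k < n)
    (α : Fin n → Fin k → ℂ)
    (hgen : ∀ S : Finset (Fin n), S.card = k →
      LinearIndependent ℂ (fun i : S => α i.1)) :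
    (⋂ L : Finset (Fin n), ⋂ (_ : L.card = k + 1), Dsub k n α L) = Ccen k n α :=
  stmt_3_general (fun i => dotProductEquiv ℂ (Fin k) (α i))
    ((Submodule.finrank_le _).trans (by simp [Subspace.dual_finrank_eq]))
    (by simpa using Nat.cast_le.2 hkn)
end

section
/- Let L_1,…,L_r be subsets of {1,…,n}, each of size k+1, fix i_0 ∈ {1,…,r}, and let t_1,…,t_d ∈ X := ⋂_{i=1}^r D_{L_i} be translations whose K_T-vector sets {v_{i_0,j}(t_h)}_{j≠i_0}, h = 1,…,d, are weakly linearly independent (i.e., Σ_{h=1}^d a_h v_{i_0,j}(t_h) = 0 for all j ≠ i_0 implies a_1 = … = a_d = 0). Then the ℂ-linear subspace X of ℂ^n has dimension at least k + d. -/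
open Matrix

/-!
Moving all hyperplanes by a common vector `x` changes `t` by `(α_i ⬝ x)_i`; these central
translations form a `k`-dimensional subspace of `X`. If `∑ a_h t_h` is central, given by `x`, then
uniqueness of intersection points forces `∑ a_h P_{L_j}(t_h) = x` for every `j`, so all the
combinations `∑ a_h v_{i₀,j}(t_h)` vanish and `a = 0`. Hence the `t_h` are linearly independent
modulo the central translations, which gives `d` further dimensions.
-/

section ConcurrentTranslations

variable {R V ι : Type*} [Semiring R] [AddCommMonoid V] [Module R V]

/-- The space of translations `t` for which the hyperplanes `A_i = t_i`, `i ∈ S`, have a common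
point. The arrangement is encoded by the linear map `A` whose coordinates are its defining linear
forms; the range of `A` then consists of the translations with all hyperplanes concurrent. -/
def concurrentTranslations (A : V →ₗ[R] ι → R) (S : Set ι) : Submodule R (ι → R) where
  carrier := {t | ∃ p, Set.EqOn (A p) t S}
  add_mem' := by
    rintro s t ⟨p, hp⟩ ⟨q, hq⟩
    exact ⟨p + q, fun i hi => by rw [map_add, Pi.add_apply, hp hi, hq hi, Pi.add_apply]⟩
  zero_mem' := ⟨0, fun i _ => by rw [map_zero]⟩
  smul_mem' := by
    rintro c t ⟨p, hp⟩
    exact ⟨c • p, fun i hi => by rw [map_smul, Pi.smul_apply, hp hi, Pi.smul_apply]⟩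

lemma range_le_concurrentTranslations (A : V →ₗ[R] ι → R) (S : Set ι) :
    LinearMap.range A ≤ concurrentTranslations A S := by
  rintro _ ⟨p, rfl⟩
  exact ⟨p, Set.eqOn_refl _ _⟩

lemma eqOn_linearCombination {H : Type*} {A : V →ₗ[R] ι → R} {S : Set ι} {t : H → ι → R}
    {P : H → V} (hP : ∀ h, Set.EqOn (A (P h)) (t h) S) (a : H →₀ R) :
    Set.EqOn (A (Finsupp.linearCombination R P a)) (Finsupp.linearCombination R t a) S := by
  intro i hi
  simp only [Finsupp.linearCombination_apply, Finsupp.sum, map_sum, map_smul, Finset.sum_apply,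
    Pi.smul_apply, hP _ hi]

end ConcurrentTranslations

theorem linearIndependent_mkQ_range_of_linearIndependent_sub {R V ι J H : Type*} [Ring R]
    [AddCommGroup V] [Module R V] {A : V →ₗ[R] ι → R} {L : J → Set ι}
    (hA : ∀ j p q, Set.EqOn (A p) (A q) (L j) → p = q) (i₀ : J)
    {t : H → ι → R} {P : H → J → V} (hP : ∀ h j, Set.EqOn (A (P h j)) (t h) (L j))
    (hv : LinearIndependent R fun h j => P h j - P h i₀) :
    LinearIndependent R ((LinearMap.range A).mkQ ∘ t) := by
  rw [linearIndependent_iff] at hv ⊢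
  intro a ha
  rw [← Finsupp.apply_linearCombination, Submodule.mkQ_apply, Submodule.Quotient.mk_eq_zero] at ha
  obtain ⟨x, hx⟩ := ha
  have hpoint (j : J) : Finsupp.linearCombination R (fun h => P h j) a = x :=
    hA j _ _ (hx ▸ eqOn_linearCombination (fun h => hP h j) a)
  refine hv a (funext fun j => ?_)
  calc Finsupp.linearCombination R (fun h j => P h j - P h i₀) a j
      = Finsupp.linearCombination R (fun h => P h j) a
          - Finsupp.linearCombination R (fun h => P h i₀) a := by
        simp only [Finsupp.linearCombination_apply, Finsupp.sum, Finset.sum_apply, Pi.smul_apply,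
          smul_sub, Finset.sum_sub_distrib]
    _ = 0 := by rw [hpoint, hpoint, sub_self]

lemma finrank_add_card_le_of_linearIndependent_mkQ {K M H : Type*} [DivisionRing K]
    [AddCommGroup M] [Module K M] [Fintype H] {W X : Submodule K M} [FiniteDimensional K X]
    (hWX : W ≤ X) {t : H → M} (htX : ∀ h, t h ∈ X) (ht : LinearIndependent K (W.mkQ ∘ t)) :
    Module.finrank K W + Fintype.card H ≤ Module.finrank K X := by
  have : FiniteDimensional K W := Submodule.finiteDimensional_of_le hWX
  let b := Module.finBasis K W
  have hbt : LinearIndependent K (Sum.elim (fun i => (b i : M)) t) :=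
    b.linearIndependent.sumElim_of_quotient t ht
  have hspan : Submodule.span K (Set.range (Sum.elim (fun i => (b i : M)) t)) ≤ X := by
    rw [Submodule.span_le, Set.range_subset_iff]
    exact Sum.rec (fun i => hWX (b i).2) htX
  simpa [finrank_span_eq_card hbt] using Submodule.finrank_mono hspan

lemma eq_of_dotProduct_eq_of_span_eq_top {R m κ : Type*} [CommSemiring R] [Fintype m]
    {v : κ → m → R} (hv : Submodule.span R (Set.range v) = ⊤) {p q : m → R}
    (h : ∀ i, v i ⬝ᵥ p = v i ⬝ᵥ q) : p = q := by
  classical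
  refine (dotProductEquiv R m).injective (LinearMap.ext_on_range hv fun i => ?_)
  simpa only [dotProductEquiv_apply_apply, dotProduct_comm _ (v i)] using h i

lemma eq_of_eqOn_dotProduct_of_generic {K ι m : Type*} [Field K] [Fintype m] {α : ι → m → K}
    (hgen : ∀ S : Finset ι, S.card = Fintype.card m → LinearIndependent K fun i : S => α i)
    {S : Finset ι} (hS : Fintype.card m ≤ S.card) {p q : m → K}
    (h : Set.EqOn (fun i => α i ⬝ᵥ p) (fun i => α i ⬝ᵥ q) S) : p = q := by
  obtain ⟨T, hTS, hT⟩ := Finset.exists_subset_card_eq hS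
  have hspan : Submodule.span K (Set.range fun i : T => α i) = ⊤ :=
    (hgen T hT).span_eq_top_of_card_eq_finrank' (by simp [hT])
  exact eq_of_dotProduct_eq_of_span_eq_top hspan fun i => h (hTS i.2)

theorem stmt_9_general {K V ι J H : Type*} [DivisionRing K] [AddCommGroup V] [Module K V]
    [Finite ι] [Fintype H] (A : V →ₗ[K] ι → K) (L : J → Set ι)
    (hA : ∀ j p q, Set.EqOn (A p) (A q) (L j) → p = q) (i₀ : J) (t : H → ι → K) (P : H → J → V)
    (hP : ∀ h j, Set.EqOn (A (P h j)) (t h) (L j))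
    (hv : LinearIndependent K fun h j => P h j - P h i₀) :
    Module.finrank K V + Fintype.card H ≤
      Module.finrank K ↥(⨅ j, concurrentTranslations A (L j)) := by
  have hAinj : Function.Injective A := fun p q hpq => hA i₀ p q (hpq ▸ Set.eqOn_refl _ _)
  rw [← LinearMap.finrank_range_of_inj hAinj]
  exact finrank_add_card_le_of_linearIndependent_mkQ
    (le_iInf fun j => range_le_concurrentTranslations A (L j))
    (fun h => Submodule.mem_iInf _ |>.2 fun j => ⟨P h j, hP h j⟩)
    (linearIndependent_mkQ_range_of_linearIndependent_sub hA i₀ hP hv)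

/-- If `t_1, …, t_d ∈ X = ⋂_{i=1}^r D_{L_i}` have weakly linearly independent
`K_T`-vector sets, then the linear subspace `X` of `ℂⁿ` has dimension at least `k + d`.
Here `P h i` represents the (unique) point `P_{L_i}(t_h)`, so
`v_{i₀,j}(t_h) = P h j - P h i₀`. -/
theorem stmt_9 (k n : ℕ) (hk : 0 < k) (hkn : k < n)
    (α : Fin n → Fin k → ℂ)
    (hgen : ∀ S : Finset (Fin n), S.card = k →
      LinearIndependent ℂ (fun i : S => α i.1))
    (r : ℕ) (L : Fin r → Finset (Fin n))
    (hcard : ∀ i, (L i).card = k + 1)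
    (i₀ : Fin r)
    (d : ℕ) (t : Fin d → Fin n → ℂ)
    (ht : ∀ h : Fin d, t h ∈ ⋂ i : Fin r, Dsub k n α (L i))
    (P : Fin d → Fin r → Fin k → ℂ)
    (hP : ∀ (h : Fin d) (i : Fin r), ∀ p ∈ L i, α p ⬝ᵥ P h i = t h p)
    (hwli : ∀ a : Fin d → ℂ,
      (∀ j : Fin r, j ≠ i₀ → ∑ h : Fin d, a h • (P h j - P h i₀) = 0) →
      ∀ h : Fin d, a h = 0) :
    ∃ W : Submodule ℂ (Fin n → ℂ),
      (W : Set (Fin n → ℂ)) = ⋂ i : Fin r, Dsub k n α (L i) ∧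
      k + d ≤ Module.finrank ℂ W := by
  let A : (Fin k → ℂ) →ₗ[ℂ] Fin n → ℂ := (Matrix.of α).mulVecLin
  have hA (j : Fin r) (p q : Fin k → ℂ) (hpq : Set.EqOn (A p) (A q) (L j)) : p = q :=
    eq_of_eqOn_dotProduct_of_generic (by simpa using hgen) (by simp [hcard j]) hpq
  have hv : LinearIndependent ℂ fun h j => P h j - P h i₀ :=
    Fintype.linearIndependent_iff.2 fun a ha => hwli a fun j _ => by simpa using congrFun ha j
  refine ⟨⨅ j, concurrentTranslations A (L j), Submodule.coe_iInf _, ?_⟩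
  simpa using stmt_9_general A (fun j => (L j : Set (Fin n))) hA i₀ t P hP hv
end

section
/- Let a, b ∈ ℝ with a, b ∉ {0, 1, −1} and a ≠ b, a ≠ −b, set (t_1,…,t_6) = (1,−1,a,−a,b,−b) and α_i = (1, t_i, t_i²) ∈ ℝ^3 for i = 1,…,6. Then the subspace D_{{1,2,3,4}} ∩ D_{{1,2,5,6}} ∩ D_{{3,4,5,6}} of ℝ^6 has dimension at least 4; that is, the intersection of these three discriminantal hyperplanes has codimension at most 2 (rank 2), strictly smaller than its multiplicity 3. -/
open Matrix

/-- The normal vector `(1, t, t²)` of the cyclic arrangement. -/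
def cyc (s : ℝ) : Fin 3 → ℝ := ![1, s, s ^ 2]

/-- `DsubR L` is the set of translations `t ∈ ℝ⁶` such that the affine planes
`H_i^{t_i} = {x ∈ ℝ³ : α_i ⬝ x = t_i}`, `i ∈ L`, have a common point, where
`α_1,…,α_6` are the normals of the cyclic arrangement with parameters
`(1,−1,a,−a,b,−b)`. -/
def DsubR (a b : ℝ) (L : Finset (Fin 6)) : Set (Fin 6 → ℝ) :=
  {t | ∃ p : Fin 3 → ℝ,
    ∀ i ∈ L, ![cyc 1, cyc (-1), cyc a, cyc (-a), cyc b, cyc (-b)] i ⬝ᵥ p = t i}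

/-!
The difference and the sum of `cyc s ⬝ᵥ p` and `cyc (-s) ⬝ᵥ p` separate the odd and even parts of
the polynomial `p 0 + p 1 X + p 2 X²`. For two opposite pairs `±s`, `±r` with `s² ≠ r²` the even
part can be interpolated freely, while the odd part forces the level differences to be proportional
to `(s, r)`. Hence the three discriminantal hyperplanes say that the three level differences are
pairwise proportional to `(1, a, b)`, which places them on a line in `ℝ³`: only two independent
conditions.
-/

theorem exists_mul_eq_and_mul_eq_iff {G₀ : Type*} [CommGroupWithZero G₀] {s r x y : G₀}
    (h : s ≠ 0 ∨ r ≠ 0) : (∃ m, s * m = x ∧ r * m = y) ↔ r * x = s * y := by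
  constructor
  · rintro ⟨m, rfl, rfl⟩
    exact mul_left_comm r s m
  · intro hxy
    rcases h with hs | hr
    · refine ⟨x / s, mul_div_cancel₀ x hs, ?_⟩
      rw [← mul_div_assoc, hxy, mul_div_cancel_left₀ y hs]
    · refine ⟨y / r, ?_, mul_div_cancel₀ y hr⟩
      rw [← mul_div_assoc, ← hxy, mul_div_cancel_left₀ x hr]

theorem exists_add_mul_eq_and_add_mul_eq {K : Type*} [DivisionRing K] {σ ρ : K} (h : σ ≠ ρ)
    (x y : K) : ∃ c q, c + σ * q = x ∧ c + ρ * q = y := by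
  let q := (σ - ρ)⁻¹ * (x - y)
  have hq : σ * q - ρ * q = x - y := by
    rw [← sub_mul, mul_inv_cancel_left₀ (sub_ne_zero.2 h)]
  exact ⟨x - σ * q, q, sub_add_cancel _ _, by rw [sub_add, hq, sub_sub_cancel]⟩

theorem mem_span_one_cons_iff {R : Type*} [CommSemiring R] {a b : R} {d : Fin 3 → R} :
    d ∈ Submodule.span R {![1, a, b]} ↔ a * d 0 = d 1 ∧ b * d 0 = d 2 := by
  rw [Submodule.mem_span_singleton]
  constructor
  · rintro ⟨c, rfl⟩
    simp [mul_comm]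
  · rintro ⟨h₁, h₂⟩
    refine ⟨d 0, funext <| Fin.forall_fin_succ.2 ?_⟩
    simp [Fin.forall_fin_two, ← h₁, ← h₂, mul_comm]

theorem finrank_add_finrank_le_finrank_comap_add_finrank {K V V' : Type*} [DivisionRing K]
    [AddCommGroup V] [Module K V] [AddCommGroup V'] [Module K V']
    [FiniteDimensional K V] [FiniteDimensional K V']
    (f : V →ₗ[K] V') (W : Submodule K V') :
    Module.finrank K V + Module.finrank K W ≤
      Module.finrank K (W.comap f) + Module.finrank K V' := by
  have hker : LinearMap.ker (W.mkQ ∘ₗ f) = W.comap f := by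
    rw [LinearMap.ker_comp, Submodule.ker_mkQ]
  have hnullity := (W.mkQ ∘ₗ f).finrank_range_add_finrank_ker
  have hrange := (LinearMap.range (W.mkQ ∘ₗ f)).finrank_le
  have hquot := W.finrank_quotient_add_finrank
  rw [hker] at hnullity
  omega

theorem cyc_dotProduct_eq_and_cyc_neg_dotProduct_eq_iff (s u u' : ℝ) (p : Fin 3 → ℝ) :
    cyc s ⬝ᵥ p = u ∧ cyc (-s) ⬝ᵥ p = u' ↔
      s * p 1 = (u - u') / 2 ∧ p 0 + s ^ 2 * p 2 = (u + u') / 2 := by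
  simp only [cyc, vec3_dotProduct, cons_val]
  constructor <;> rintro ⟨h, h'⟩ <;> constructor <;> linarith

theorem exists_cyc_dotProduct_eq_iff {s r : ℝ} (h : s ^ 2 ≠ r ^ 2) (u u' v v' : ℝ) :
    (∃ p : Fin 3 → ℝ, (cyc s ⬝ᵥ p = u ∧ cyc (-s) ⬝ᵥ p = u') ∧
      cyc r ⬝ᵥ p = v ∧ cyc (-r) ⬝ᵥ p = v') ↔ r * (u - u') = s * (v - v') := by
  have hne : s ≠ 0 ∨ r ≠ 0 := by
    by_contra! h0
    exact h (by rw [h0.1, h0.2])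
  have hodd : (∃ m, s * m = (u - u') / 2 ∧ r * m = (v - v') / 2) ↔
      r * (u - u') = s * (v - v') := by
    rw [exists_mul_eq_and_mul_eq_iff hne, mul_div_assoc', mul_div_assoc', div_left_inj' two_ne_zero]
  simp only [cyc_dotProduct_eq_and_cyc_neg_dotProduct_eq_iff, ← hodd]
  constructor
  · rintro ⟨p, ⟨hs, -⟩, hr, -⟩
    exact ⟨p 1, hs, hr⟩
  · rintro ⟨m, hs, hr⟩
    obtain ⟨c, q, hcs, hcr⟩ := exists_add_mul_eq_and_add_mul_eq h ((u + u') / 2) ((v + v') / 2)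
    exact ⟨![c, m, q], ⟨hs, hcs⟩, hr, hcr⟩

/-- The differences of the levels of the three pairs of planes with opposite parameters `±1`, `±a`,
`±b`, as a linear map in the six levels. -/
def pairDiff : (Fin 6 → ℝ) →ₗ[ℝ] Fin 3 → ℝ :=
  LinearMap.pi ![.proj 0 - .proj 1, .proj 2 - .proj 3, .proj 4 - .proj 5]

section DsubR

variable {a b : ℝ} {t : Fin 6 → ℝ}

theorem mem_DsubR_0123_iff (h : 1 ≠ a ^ 2) :
    t ∈ DsubR a b {0, 1, 2, 3} ↔ a * pairDiff t 0 = pairDiff t 1 := by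
  have hsq : (1 : ℝ) ^ 2 ≠ a ^ 2 := by rwa [one_pow]
  simpa [DsubR, pairDiff, and_assoc] using exists_cyc_dotProduct_eq_iff hsq (t 0) (t 1) (t 2) (t 3)

theorem mem_DsubR_0145_iff (h : 1 ≠ b ^ 2) :
    t ∈ DsubR a b {0, 1, 4, 5} ↔ b * pairDiff t 0 = pairDiff t 2 := by
  have hsq : (1 : ℝ) ^ 2 ≠ b ^ 2 := by rwa [one_pow]
  simpa [DsubR, pairDiff, and_assoc] using exists_cyc_dotProduct_eq_iff hsq (t 0) (t 1) (t 4) (t 5)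

theorem mem_DsubR_2345_iff (h : a ^ 2 ≠ b ^ 2) :
    t ∈ DsubR a b {2, 3, 4, 5} ↔ b * pairDiff t 1 = a * pairDiff t 2 := by
  simpa [DsubR, pairDiff, and_assoc] using exists_cyc_dotProduct_eq_iff h (t 2) (t 3) (t 4) (t 5)

theorem coe_comap_pairDiff_span (ha : 1 ≠ a ^ 2) (hb : 1 ≠ b ^ 2) (hab : a ^ 2 ≠ b ^ 2) :
    ((Submodule.span ℝ {![1, a, b]}).comap pairDiff : Set (Fin 6 → ℝ)) =
      DsubR a b {0, 1, 2, 3} ∩ DsubR a b {0, 1, 4, 5} ∩ DsubR a b {2, 3, 4, 5} := by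
  ext t
  rw [SetLike.mem_coe, Submodule.mem_comap, mem_span_one_cons_iff, Set.mem_inter_iff,
    Set.mem_inter_iff, mem_DsubR_0123_iff ha, mem_DsubR_0145_iff hb, mem_DsubR_2345_iff hab]
  refine (and_iff_left_of_imp fun ⟨h₁, h₂⟩ => ?_).symm
  rw [← h₁, ← h₂, mul_left_comm]

end DsubR

/-- The intersection `D_{{1,2,3,4}} ∩ D_{{1,2,5,6}} ∩ D_{{3,4,5,6}}` of three
discriminantal hyperplanes of `B(6,3,A⁰)` for the cyclic arrangement has dimension at
least 4, i.e. codimension at most 2, strictly smaller than its multiplicity 3.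
(Indices are 0-based: `{1,2,3,4} = {0,1,2,3}` etc.) -/
theorem stmt_13 (a b : ℝ)
    (ha0 : a ≠ 0) (ha1 : a ≠ 1) (ha1' : a ≠ -1)
    (hb0 : b ≠ 0) (hb1 : b ≠ 1) (hb1' : b ≠ -1)
    (hab : a ≠ b) (hab' : a ≠ -b) :
    ∃ W : Submodule ℝ (Fin 6 → ℝ),
      (W : Set (Fin 6 → ℝ)) =
        DsubR a b {0, 1, 2, 3} ∩ DsubR a b {0, 1, 4, 5} ∩ DsubR a b {2, 3, 4, 5} ∧
      4 ≤ Module.finrank ℝ W := by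
  have ha : 1 ≠ a ^ 2 := (sq_ne_one_iff.2 ⟨ha1, ha1'⟩).symm
  have hb : 1 ≠ b ^ 2 := (sq_ne_one_iff.2 ⟨hb1, hb1'⟩).symm
  have hsq : a ^ 2 ≠ b ^ 2 := fun h => (sq_eq_sq_iff_eq_or_eq_neg.1 h).elim hab hab'
  refine ⟨_, coe_comap_pairDiff_span ha hb hsq, ?_⟩
  have hspan : Module.finrank ℝ (Submodule.span ℝ {![1, a, b]}) = 1 :=
    finrank_span_singleton fun h => one_ne_zero (congrFun h 0)
  have hcodim := finrank_add_finrank_le_finrank_comap_add_finrank pairDiff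
    (Submodule.span ℝ {![1, a, b]})
  rw [hspan, Module.finrank_fin_fun, Module.finrank_fin_fun] at hcodim
  omega
end

section
/- Let k = 8, n = 12, and let α_1,…,α_12 ∈ ℂ^8 be as listed in the context. Let L_1 = {1,…,12} \ {10,11,12}, L_2 = {1,…,12} \ {7,8,9}, L_3 = {1,…,12} \ {4,5,6}, L_4 = {1,…,12} \ {1,2,3}. Then the subspace D_{L_1} ∩ D_{L_2} ∩ D_{L_3} ∩ D_{L_4} of ℂ^{12} has dimension at least 9; in particular the intersection of the four discriminantal hyperplanes D_{L_1},…,D_{L_4} has codimension at most 3, strictly smaller than its multiplicity 4. -/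
open Matrix

/-- The normals of the arrangement of 12 hyperplanes in `ℂ⁸` of Example `B(12,8,A⁰)`. -/
def alpha12 : Fin 12 → Fin 8 → ℂ :=
  ![![0, 0, 1, 1, 0, 1, -1, 1],
    ![0, 0, 0, 1, 1, 1, 1, -1],
    ![0, 0, 1, 0, 0, 0, 1, 1],
    ![0, 1, 0, 1, 1, 1, 0, 1],
    ![0, 2, 0, -1, -1, 0, 1, -1],
    ![0, -1, 0, 2, 1, -1, -1, 1],
    ![1, 0, 0, 1, 0, -1, -1, 1],
    ![-1, 0, 0, 0, 2, 1, 1, 1],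
    ![-4, 0, 0, 0, 1, -1, 1, 1],
    ![1, 1, 1, -1, -1, -1, -1, 1],
    ![1, 1, 1, 2, 2, 2, 0, 3],
    ![-2, -2, -2, 3, 4, -5, 6, 7]]

/-- `Dsub12 L` is the set of translations `t ∈ ℂ¹²` such that the affine hyperplanes
`H_i^{t_i} = {x ∈ ℂ⁸ : α_i ⬝ x = t_i}`, `i ∈ L`, have a common point. -/
def Dsub12 (L : Finset (Fin 12)) : Set (Fin 12 → ℂ) :=
  {t | ∃ p : Fin 8 → ℂ, ∀ i ∈ L, alpha12 i ⬝ᵥ p = t i}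

/-!
Translating all hyperplanes to a common point `x` gives `t = (α_i ⬝ x)_i`, which lies in every
`D_L`; as the normals span `ℂ⁸`, these `t` form an 8-dimensional subspace of the intersection.
A ninth dimension comes from a translation after which the hyperplanes of each `L_j` meet in a
point `p_j` that depends on `j`. Such a translation exists as soon as `p_j - p_k` is orthogonal to
the six normals indexed by `L_j ∩ L_k`, and the `α_i` are arranged so that `0, e_1, e_2, e_3` are
points with this property.
-/

section DiscriminantalSubspace

open Set Module

variable {ι J R K V : Type*} [AddCommGroup V]

/-- The discriminantal subspace `D_L` of the hyperplane arrangement given by the coordinate forms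
`x ↦ f x i` on `V`: the translations `t` whose translated hyperplanes `f x i = t i`, `i ∈ L`, have
a common point. -/
def discriminantalSubspace [CommRing R] [Module R V] (f : V →ₗ[R] ι → R) (L : Set ι) :
    Submodule R (ι → R) where
  carrier := {t | ∃ p, EqOn (f p) t L}
  zero_mem' := ⟨0, fun i _ => by simp⟩
  add_mem' := by
    rintro s t ⟨p, hp⟩ ⟨q, hq⟩
    exact ⟨p + q, fun i hi => by simp [hp hi, hq hi]⟩
  smul_mem' := by
    rintro c t ⟨p, hp⟩
    exact ⟨c • p, fun i hi => by simp [hp hi]⟩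

section CommRing

variable [CommRing R] [Module R V] {f : V →ₗ[R] ι → R} {L : Set ι}

theorem range_le_discriminantalSubspace : LinearMap.range f ≤ discriminantalSubspace f L := by
  rintro _ ⟨p, rfl⟩
  exact ⟨p, eqOn_refl _ _⟩

theorem mem_iInf_discriminantalSubspace {L : J → Set ι} {t : ι → R} :
    t ∈ ⨅ j, discriminantalSubspace f (L j) ↔ ∃ p : J → V, ∀ j, EqOn (f (p j)) t (L j) :=
  (Submodule.mem_iInf _).trans Classical.skolem

theorem injective_of_eqOn_zero (hL : ∀ x, EqOn (f x) 0 L → x = 0) : Function.Injective f :=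
  (injective_iff_map_eq_zero f).2 fun x hx => hL x fun i _ => congrFun hx i

theorem notMem_range_of_eqOn (hL : ∀ x, EqOn (f x) 0 L → x = 0) {p : V} {t : ι → R}
    (hp : EqOn (f p) t L) (hne : f p ≠ t) : t ∉ LinearMap.range f := by
  rintro ⟨q, rfl⟩
  have hpq : p - q = 0 := hL _ fun i hi => by simp [hp hi]
  exact hne (by rw [sub_eq_zero.1 hpq])

end CommRing

theorem finrank_lt_finrank_iInf_discriminantalSubspace [Finite ι] [Field K] [Module K V]
    {f : V →ₗ[K] ι → K} (hf : Function.Injective f) {L : J → Set ι} {t : ι → K}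
    (ht : t ∈ ⨅ j, discriminantalSubspace f (L j)) (hrange : t ∉ LinearMap.range f) :
    finrank K V < finrank K ↥(⨅ j, discriminantalSubspace f (L j)) := by
  have hle : LinearMap.range f ≤ ⨅ j, discriminantalSubspace f (L j) :=
    le_iInf fun _ => range_le_discriminantalSubspace
  rw [← LinearMap.finrank_range_of_inj hf]
  exact Submodule.finrank_lt_finrank_of_lt (SetLike.lt_iff_le_and_exists.2 ⟨hle, t, ht, hrange⟩)

end DiscriminantalSubspace

/-- The linear map `x ↦ (α_i ⬝ x)_i` whose coordinate forms define the arrangement. -/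
def alpha12Lin : (Fin 8 → ℂ) →ₗ[ℂ] Fin 12 → ℂ :=
  (Matrix.of alpha12).mulVecLin

theorem alpha12Lin_apply (x : Fin 8 → ℂ) :
    alpha12Lin x =
      ![x 2 + x 3 + x 5 - x 6 + x 7,
        x 3 + x 4 + x 5 + x 6 - x 7,
        x 2 + x 6 + x 7,
        x 1 + x 3 + x 4 + x 5 + x 7,
        2 * x 1 - x 3 - x 4 + x 6 - x 7,
        -x 1 + 2 * x 3 + x 4 - x 5 - x 6 + x 7,
        x 0 + x 3 - x 5 - x 6 + x 7,
        -x 0 + 2 * x 4 + x 5 + x 6 + x 7,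
        -4 * x 0 + x 4 - x 5 + x 6 + x 7,
        x 0 + x 1 + x 2 - x 3 - x 4 - x 5 - x 6 + x 7,
        x 0 + x 1 + x 2 + 2 * x 3 + 2 * x 4 + 2 * x 5 + 3 * x 7,
        -2 * x 0 - 2 * x 1 - 2 * x 2 + 3 * x 3 + 4 * x 4 - 5 * x 5 + 6 * x 6 + 7 * x 7] := by
  ext i
  fin_cases i <;> simp [alpha12Lin, alpha12, dotProduct, Fin.sum_univ_succ] <;> ring

/-- The index sets `L_1, …, L_4`, with indices counted from `0`. -/
def indexSet12 : Fin 4 → Finset (Fin 12) :=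
  ![{0, 1, 2, 3, 4, 5, 6, 7, 8},
    {0, 1, 2, 3, 4, 5, 9, 10, 11},
    {0, 1, 2, 6, 7, 8, 9, 10, 11},
    {3, 4, 5, 6, 7, 8, 9, 10, 11}]

theorem coe_iInf_discriminantalSubspace_alpha12Lin :
    (↑(⨅ j, discriminantalSubspace alpha12Lin (indexSet12 j)) : Set (Fin 12 → ℂ)) =
      Dsub12 {0, 1, 2, 3, 4, 5, 6, 7, 8} ∩
      Dsub12 {0, 1, 2, 3, 4, 5, 9, 10, 11} ∩
      Dsub12 {0, 1, 2, 6, 7, 8, 9, 10, 11} ∩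
      Dsub12 {3, 4, 5, 6, 7, 8, 9, 10, 11} := by
  have coe_eq (L : Finset (Fin 12)) :
      (discriminantalSubspace alpha12Lin L : Set (Fin 12 → ℂ)) = Dsub12 L := rfl
  ext t
  simp [coe_eq, indexSet12, Fin.forall_fin_succ, and_assoc]

theorem eq_zero_of_eqOn_alpha12Lin_zero (x : Fin 8 → ℂ)
    (hx : Set.EqOn (alpha12Lin x) 0 (indexSet12 0)) : x = 0 := by
  obtain ⟨h0, h1, h2, h3, h4, h5, h6, h7, -⟩ := by
    simpa [Set.EqOn, indexSet12, alpha12Lin_apply] using hx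
  -- Six equations express the other coordinates through `x 6` and `x 7`, which `h7` and `h5` kill.
  have e4 : x 4 = x 7 - 3 * x 6 := by linear_combination h1 - h0 + h2
  have e1 : x 1 = x 6 - 2 * x 7 := by linear_combination h3 - h0 + h2 - e4
  have e3 : x 3 = 6 * x 6 - 6 * x 7 := by linear_combination 2 * e1 - e4 - h4
  have e5 : x 5 = 6 * x 7 - 4 * x 6 := by linear_combination h0 - h2 - e3
  have e0 : x 0 = 11 * x 7 - 9 * x 6 := by linear_combination h6 - e3 + e5
  have e2 : x 2 = -x 6 - x 7 := by linear_combination h2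
  have e7 : x 7 = 0 := by linear_combination (-1 / 2) * (h7 + e0 - 2 * e4 - e5)
  have e6 : x 6 = 0 := by linear_combination (1 / 11) * (h5 + e1 - 2 * e3 - e4 + e5 + 14 * e7)
  ext j
  fin_cases j <;> simp [e0, e1, e2, e3, e4, e5, e6, e7]

/-- The common points `p_j` of the four subarrangements `L_j` after the translation
`gluedTranslation12`. The difference `p_j - p_k` is orthogonal to `α_i` for `i ∈ L_j ∩ L_k`, so
that the translations moving everything to `p_j` agree on the overlaps of the `L_j`. -/
def commonPoint12 : Fin 4 → Fin 8 → ℂ :=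
  ![0, Pi.single 0 1, Pi.single 1 1, Pi.single 2 1]

/-- The translation with `t_i = α_i ⬝ p_j` for `i ∈ L_j`, where `p_j` is `commonPoint12 j`. -/
def gluedTranslation12 : Fin 12 → ℂ :=
  ![0, 0, 0, 0, 0, 0, 0, 0, 0, 1, 1, -2]

theorem eqOn_alpha12Lin_commonPoint12 (j : Fin 4) :
    Set.EqOn (alpha12Lin (commonPoint12 j)) gluedTranslation12 (indexSet12 j) := by
  fin_cases j <;>
    simp [Set.EqOn, indexSet12, alpha12Lin_apply, commonPoint12, gluedTranslation12]

theorem gluedTranslation12_notMem_range : gluedTranslation12 ∉ LinearMap.range alpha12Lin := by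
  refine notMem_range_of_eqOn eq_zero_of_eqOn_alpha12Lin_zero (eqOn_alpha12Lin_commonPoint12 0) ?_
  intro h
  simpa [commonPoint12, gluedTranslation12] using congrFun h 9

/-- For `L_1 = [12] \ {10,11,12}`, `L_2 = [12] \ {7,8,9}`, `L_3 = [12] \ {4,5,6}`,
`L_4 = [12] \ {1,2,3}` (written below with 0-based indices), the intersection
`D_{L_1} ∩ D_{L_2} ∩ D_{L_3} ∩ D_{L_4}` has dimension at least 9, i.e. codimension at
most 3, strictly smaller than its multiplicity 4. -/
theorem stmt_14 :
    ∃ W : Submodule ℂ (Fin 12 → ℂ),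
      (W : Set (Fin 12 → ℂ)) =
        Dsub12 {0, 1, 2, 3, 4, 5, 6, 7, 8} ∩
        Dsub12 {0, 1, 2, 3, 4, 5, 9, 10, 11} ∩
        Dsub12 {0, 1, 2, 6, 7, 8, 9, 10, 11} ∩
        Dsub12 {3, 4, 5, 6, 7, 8, 9, 10, 11} ∧
      9 ≤ Module.finrank ℂ W := by
  refine ⟨⨅ j, discriminantalSubspace alpha12Lin (indexSet12 j),
    coe_iInf_discriminantalSubspace_alpha12Lin, ?_⟩
  have hmem : gluedTranslation12 ∈ ⨅ j, discriminantalSubspace alpha12Lin (indexSet12 j) :=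
    mem_iInf_discriminantalSubspace.2 ⟨commonPoint12, eqOn_alpha12Lin_commonPoint12⟩
  have hinj : Function.Injective alpha12Lin :=
    injective_of_eqOn_zero eq_zero_of_eqOn_alpha12Lin_zero
  have hlt := finrank_lt_finrank_iInf_discriminantalSubspace hinj hmem
    gluedTranslation12_notMem_range
  rwa [Module.finrank_fin_fun] at hlt
end
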